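/- Let q = 155. There exist infinitely many even, algebraic-valued, Dirichlet-type periodic functions f with period q that are not constant on the residues coprime to q and satisfy L'(0,f) = 0. Explicitly, for each algebraic number c, the function f defined on 1 ≤ s ≤ 77 with gcd(s,155) = 1 by f(s) = χ(s) - 1 + c (where χ is the even character modulo 155 induced by the non-principal real character modulo 5), extended by evenness and set to 0 on residues not coprime to 155, satisfies L'(0,f) = 0. -/

import Mathlib

open scoped Real

/-- The value at `s = 0` of the derivative of the analytic continuation of
`L(s,f) = ∑_{n ≥ 1} f(n)/n^s`, given via `L(s,f) = q^{-s} ∑_{a=1}^q f(a) ζ(s, a/q)`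
with `ζ` the Hurwitz zeta function. -/
noncomputable def Lderiv0 (q : ℕ) (f : ℤ → ℂ) : ℂ :=
  deriv (fun s : ℂ =>
    (q : ℂ) ^ (-s) *
      ∑ a ∈ Finset.Icc 1 q, f a * HurwitzZeta.hurwitzZeta (((a : ℝ) / q : ℝ) : UnitAddCircle) s) 0

/-- The even character modulo `155` induced by the non-principal real character `χ₀` mod `5`
(with `χ₀(1) = χ₀(4) = 1` and `χ₀(2) = χ₀(3) = -1`): `χ(s) = χ₀(s mod 5)`. -/
noncomputable def chi155 (s : ℤ) : ℂ :=
  if s % 5 = 1 ∨ s % 5 = 4 then 1 else if s % 5 = 2 ∨ s % 5 = 3 then -1 else 0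

/-!
For an even character `χ` of level `d ≠ 1` one has `L(0, χ) = 0`. If a prime `p ≡ 1 (mod d)` divides
`q`, then passing to level `q` multiplies `L(s, χ)` by an Euler factor `1 - p ^ (-s)`, which also
vanishes at `s = 0`, so the induced character has `L'(0) = 0`. An even function on the units modulo
`d` is a linear combination of even characters, so the same holds for its restriction to the
residues coprime to `q`. Here `d = 5` and `p = 31`.
-/

section PeriodicEven

variable {α : Type*} {q : ℕ}

lemma apply_natAbs_valMinAbs {f : ℤ → α} (hper : Function.Periodic f q) (heven : f.Even)
    (n : ℤ) : f ((n : ZMod q).valMinAbs.natAbs : ℤ) = f n := by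
  set v := (n : ZMod q).valMinAbs
  have hfv : f v = f n := by
    obtain ⟨k, hk⟩ := (ZMod.intCast_eq_intCast_iff_dvd_sub v n q).mp (ZMod.coe_valMinAbs _)
    have hvk : v = n - k • (q : ℤ) := by rw [smul_eq_mul]; linarith
    rw [hvk, hper.sub_zsmul_eq]
  rcases v.natAbs_eq with h | h
  · rw [← h, hfv]
  · rw [← heven, ← h, hfv]

lemma eq_of_forall_coprime_le_half [NeZero q] {f g : ℤ → α} (hf_per : Function.Periodic f q)
    (hf_even : f.Even) (hg_per : Function.Periodic g q) (hg_even : g.Even)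
    (h : ∀ s : ℕ, s ≤ q / 2 → Int.gcd s q = 1 → f s = g s) {n : ℤ} (hn : Int.gcd n q = 1) :
    f n = g n := by
  have hgcd_per : Function.Periodic (fun m : ℤ ↦ Int.gcd m q) q := fun m ↦ by simp
  have hgcd_even : (fun m : ℤ ↦ Int.gcd m q).Even := fun m ↦ by simp
  rw [← apply_natAbs_valMinAbs hf_per hf_even, ← apply_natAbs_valMinAbs hg_per hg_even]
  exact h _ (ZMod.natAbs_valMinAbs_le _) ((apply_natAbs_valMinAbs hgcd_per hgcd_even n).trans hn)

end PeriodicEven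

section LFunction

variable {d q : ℕ}

lemma sum_Icc_natCast_zmod {M : Type*} [AddCommMonoid M] [NeZero q] (F : ZMod q → M) :
    ∑ a ∈ Finset.Icc 1 q, F a = ∑ j, F j := by
  refine Finset.sum_nbij' (fun a : ℕ ↦ (a : ZMod q)) (fun j ↦ (j - 1).val + 1) (by simp)
    (fun j _ ↦ ?_) (fun a ha ↦ ?_) (by simp) (by simp)
  · simpa using ZMod.val_lt (j - 1)
  · obtain ⟨b, rfl⟩ := Nat.exists_eq_add_of_le' (Finset.mem_Icc.mp ha).1
    simp [ZMod.val_cast_of_lt (Finset.mem_Icc.mp ha).2]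

lemma Lderiv0_intCast [NeZero q] (Φ : ZMod q → ℂ) :
    Lderiv0 q (fun n ↦ Φ n) = deriv (ZMod.LFunction Φ) 0 := by
  have hcast (a : ℕ) : (((a : ℝ) / q : ℝ) : UnitAddCircle) = ZMod.toAddCircle (a : ZMod q) := by
    simpa using (ZMod.toAddCircle_intCast (N := q) a).symm
  refine congrArg (deriv · 0) (funext fun s ↦ ?_)
  simp only [ZMod.LFunction, hcast, Int.cast_natCast, ← sum_Icc_natCast_zmod]

lemma LFunction_sum_mul [NeZero q] {ι : Type*} (s : Finset ι) (k : ι → ℂ) (Φ : ι → ZMod q → ℂ)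
    (z : ℂ) :
    ZMod.LFunction (fun j ↦ ∑ i ∈ s, k i * Φ i j) z = ∑ i ∈ s, k i * ZMod.LFunction (Φ i) z := by
  simp only [ZMod.LFunction, Finset.sum_mul, Finset.mul_sum]
  rw [Finset.sum_comm]
  refine Finset.sum_congr rfl fun i _ ↦ Finset.sum_congr rfl fun j _ ↦ ?_
  ring

open DirichletCharacter

lemma LFunction_zero_of_even [NeZero d] (hd : d ≠ 1) {χ : DirichletCharacter ℂ d}
    (hχ : χ.Even) : LFunction χ 0 = 0 := by
  rw [LFunction, ZMod.LFunction_apply_zero_of_even hχ.to_fun, χ.map_zero' hd, neg_zero, zero_div]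

lemma hasDerivAt_LFunction_changeLevel_zero [NeZero d] [NeZero q] (hd : d ≠ 1) (hdq : d ∣ q)
    {χ : DirichletCharacter ℂ d} (hχ : χ.Even) {p : ℕ} (hp : p ∈ q.primeFactors)
    (hχp : χ p = 1) : HasDerivAt (LFunction (changeLevel hdq χ)) 0 0 := by
  let E : ℂ → ℂ := fun s ↦ ∏ ℓ ∈ q.primeFactors, (1 - χ ℓ * (ℓ : ℂ) ^ (-s))
  have hE : DifferentiableAt ℂ E 0 := by
    refine DifferentiableAt.fun_finsetProd fun ℓ hℓ ↦ ?_
    have : (ℓ : ℂ) ≠ 0 := Nat.cast_ne_zero.mpr (Nat.prime_of_mem_primeFactors hℓ).ne_zero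
    fun_prop (disch := simp [this])
  have hE0 : E 0 = 0 := Finset.prod_eq_zero hp (by simp [hχp])
  have hL : DifferentiableAt ℂ (LFunction χ) 0 := differentiableAt_LFunction χ 0 (.inl zero_ne_one)
  have hfactor : LFunction (changeLevel hdq χ) =ᶠ[nhds 0] LFunction χ * E := by
    filter_upwards [isOpen_ne.mem_nhds zero_ne_one] with s hs
    exact LFunction_changeLevel hdq χ (.inr hs)
  refine HasDerivAt.congr_of_eventuallyEq ?_ hfactor
  simpa [hE0, LFunction_zero_of_even hd hχ] using hL.hasDerivAt.mul hE.hasDerivAt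

lemma sum_char_inv_apply_mul_apply [NeZero d] (a : ZMod d) {b : ZMod d} (hb : IsUnit b) :
    ∑ χ : DirichletCharacter ℂ d, χ⁻¹ a * χ b = if a = b then (d.totient : ℂ) else 0 := by
  have hinv (χ : DirichletCharacter ℂ d) : χ⁻¹ b = χ b⁻¹ := by
    obtain ⟨u, rfl⟩ := hb
    rw [MulChar.inv_apply, Ring.inverse_unit, ZMod.inv_coe_unit]
  calc ∑ χ : DirichletCharacter ℂ d, χ⁻¹ a * χ b
      = ∑ χ : DirichletCharacter ℂ d, χ a * χ⁻¹ b := by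
        rw [← Equiv.sum_comp (Equiv.inv _)]
        simp only [Equiv.inv_apply, inv_inv]
    _ = ∑ χ : DirichletCharacter ℂ d, χ b⁻¹ * χ a := by simp only [hinv, mul_comm]
    _ = if a = b then (d.totient : ℂ) else 0 := by
        simp only [sum_char_inv_mul_char_eq ℂ hb, eq_comm]

lemma exists_eq_sum_dirichletCharacter_of_even [NeZero d] {g : ZMod d → ℂ} (hg : g.Even) :
    ∃ k : DirichletCharacter ℂ d → ℂ, (∀ χ, χ.Odd → k χ = 0) ∧
      ∀ b, IsUnit b → g b = ∑ χ, k χ * χ b := by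
  refine ⟨fun χ ↦ (d.totient : ℂ)⁻¹ * ∑ a, g a * χ⁻¹ a, fun χ hχ ↦ ?_, fun b hb ↦ ?_⟩
  · have hinv : (χ⁻¹ : DirichletCharacter ℂ d).Odd := by
      rw [DirichletCharacter.Odd, MulChar.inv_apply_eq_inv, hχ, Ring.inverse_eq_inv', inv_neg_one]
    have hsum : ∑ a, g a * χ⁻¹ a = 0 := (hg.mul_odd hinv.to_fun).sum_eq_zero
    simp only [hsum, mul_zero]
  · have htot : (d.totient : ℂ) ≠ 0 := by simp [NeZero.ne d]
    calc g b = (d.totient : ℂ)⁻¹ * ∑ a, g a * if a = b then (d.totient : ℂ) else 0 := by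
          simp [mul_comm (g b), htot]
      _ = (d.totient : ℂ)⁻¹ * ∑ a, g a * ∑ χ : DirichletCharacter ℂ d, χ⁻¹ a * χ b := by
          simp only [sum_char_inv_apply_mul_apply _ hb]
      _ = ∑ χ : DirichletCharacter ℂ d, ((d.totient : ℂ)⁻¹ * ∑ a, g a * χ⁻¹ a) * χ b := by
          simp only [Finset.mul_sum, Finset.sum_mul, mul_assoc]
          exact Finset.sum_comm

theorem Lderiv0_eq_zero_of_even [NeZero q] (hd : d ≠ 1) (hdq : d ∣ q) {p : ℕ}
    (hp : p ∈ q.primeFactors) (hpd : (p : ZMod d) = 1) {g : ZMod d → ℂ} (hg : g.Even) {f : ℤ → ℂ}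
    (hfg : ∀ n : ℤ, Int.gcd n q = 1 → f n = g n) (hf_zero : ∀ n : ℤ, Int.gcd n q ≠ 1 → f n = 0) :
    Lderiv0 q f = 0 := by
  have : NeZero d := ⟨ne_zero_of_dvd_ne_zero (NeZero.ne q) hdq⟩
  obtain ⟨k, hk_odd, hk⟩ := exists_eq_sum_dirichletCharacter_of_even hg
  have hf_sum : f = fun n : ℤ ↦ ∑ χ, k χ * changeLevel hdq χ (n : ZMod q) := by
    ext n
    by_cases hn : IsCoprime n q
    · have hnd : IsUnit (n : ZMod d) :=
        (ZMod.coe_int_isUnit_iff_isCoprime n d).mpr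
          (hn.of_isCoprime_of_dvd_right (Int.natCast_dvd_natCast.mpr hdq)).symm
      simp only [hfg n (Int.isCoprime_iff_gcd_eq_one.mp hn), hk _ hnd,
        changeLevel_eq_cast_of_dvd' _ hdq hn]
    · have hnq : ¬ IsUnit (n : ZMod q) := by
        rwa [ZMod.coe_int_isUnit_iff_isCoprime, isCoprime_comm]
      simp only [hf_zero n (mt Int.isCoprime_iff_gcd_eq_one.mpr hn), MulChar.map_nonunit _ hnq,
        mul_zero, Finset.sum_const_zero]
  have hderiv (χ : DirichletCharacter ℂ d) :
      HasDerivAt (fun s ↦ k χ * LFunction (changeLevel hdq χ) s) 0 0 := by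
    rcases χ.even_or_odd with hχ | hχ
    · simpa using (hasDerivAt_LFunction_changeLevel_zero hd hdq hχ hp
        (by rw [hpd, map_one])).const_mul (k χ)
    · simpa [hk_odd χ hχ] using hasDerivAt_const (0 : ℂ) (0 : ℂ)
  rw [hf_sum, Lderiv0_intCast fun j ↦ ∑ χ, k χ * changeLevel hdq χ j,
    funext (LFunction_sum_mul Finset.univ k fun χ ↦ changeLevel hdq χ)]
  simpa only [Finset.sum_const_zero] using! (HasDerivAt.fun_sum fun χ _ ↦ hderiv χ).deriv

end LFunction

lemma chi155_even : chi155.Even := fun n ↦ by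
  have h1 : -n % 5 = 1 ∨ -n % 5 = 4 ↔ n % 5 = 1 ∨ n % 5 = 4 := by omega
  have h2 : -n % 5 = 2 ∨ -n % 5 = 3 ↔ n % 5 = 2 ∨ n % 5 = 3 := by omega
  simp only [chi155, h1, h2]

lemma chi155_zmodCast_intCast (n : ℤ) : chi155 ((n : ZMod 5).cast : ℤ) = chi155 n := by
  simp only [chi155, ZMod.coe_intCast, Nat.cast_ofNat, Int.emod_emod]

lemma isAlgebraic_chi155 (n : ℤ) : IsAlgebraic ℚ (chi155 n) := by
  unfold chi155
  split_ifs
  exacts [isAlgebraic_one, isAlgebraic_one.neg, isAlgebraic_zero]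

/-- For `q = 155` there are infinitely many even, algebraic-valued, Dirichlet-type periodic
functions `f` with period `155`, not constant on the residues coprime to `155`, with
`L'(0,f) = 0`: explicitly, for each algebraic `c`, the function given on `1 ≤ s ≤ 77` with
`gcd(s,155) = 1` by `f(s) = χ(s) - 1 + c` (extended by evenness and vanishing on residues not
coprime to `155`) is algebraic-valued, non-constant on the coprime residues,
and satisfies `L'(0,f) = 0`. -/
theorem stmt6 (c : ℂ) (hc : IsAlgebraic ℚ c) (f : ℤ → ℂ)
    (hper : ∀ n : ℤ, f (n + 155) = f n)
    (heven : ∀ n : ℤ, f (-n) = f n)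
    (hdir : ∀ n : ℤ, Int.gcd n 155 ≠ 1 → f n = 0)
    (hval : ∀ s : ℤ, 1 ≤ s → s ≤ 77 → Int.gcd s 155 = 1 → f s = chi155 s - 1 + c) :
    (∀ n : ℤ, IsAlgebraic ℚ (f n)) ∧ Lderiv0 155 f = 0 ∧
      ∃ a b : ℤ, 1 ≤ a ∧ a ≤ 77 ∧ Int.gcd a 155 = 1 ∧
        1 ≤ b ∧ b ≤ 77 ∧ Int.gcd b 155 = 1 ∧ f a ≠ f b := by
  let g : ZMod 5 → ℂ := fun x ↦ chi155 x.cast - 1 + c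
  have hg (n : ℤ) : g n = chi155 n - 1 + c := by simp only [g, chi155_zmodCast_intCast]
  have hg_even : g.Even := fun x ↦ by
    obtain ⟨n, rfl⟩ := ZMod.intCast_surjective x
    rw [← Int.cast_neg, hg, hg, chi155_even]
  have hg_per : Function.Periodic (fun n : ℤ ↦ g n) (155 : ℕ) := fun n ↦ by
    have h155 : (155 : ZMod 5) = 0 := by decide
    simp [h155]
  have hfg (n : ℤ) (hn : Int.gcd n 155 = 1) : f n = g n := by
    refine eq_of_forall_coprime_le_half (q := 155) hper heven hg_per
      (fun m ↦ by simpa using hg_even m) (fun s hs hs' ↦ ?_) hn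
    have hs0 : s ≠ 0 := by rintro rfl; norm_num at hs'
    rw [hval s (by omega) (by omega) hs', hg]
  refine ⟨fun n ↦ ?_, Lderiv0_eq_zero_of_even (d := 5) (p := 31) (by norm_num) (by norm_num)
    (by norm_num) (by decide) hg_even hfg hdir, 1, 2, by norm_num [hval, chi155]⟩
  by_cases hn : Int.gcd n 155 = 1
  · rw [hfg n hn, hg]
    exact ((isAlgebraic_chi155 n).sub isAlgebraic_one).add hc
  · rw [hdir n hn]
    exact isAlgebraic_zero
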